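/- Assume φ0 and φ1 are continuous, φ1(y) > 0 for all y ∈ ℝ, and the likelihood ratio r(y) = φ0(y)/φ1(y) is strictly monotone on ℝ (strictly increasing or strictly decreasing). Then a single-threshold quantizer is optimal among all finite-threshold quantizers: for every n ≥ 1 and every strictly ordered thresholding vector h ∈ ℝ^n, I_n(h) ≤ sup{ I_1(t) : t ∈ ℝ }. -/

import Mathlib

/-!
Let `a` and `b` be the masses of the decision region under the two channel densities. The mutual
information depends only on `(a, b)` and is unchanged by `(a, b) ↦ (1 - a, 1 - b)`, that is, by
complementing the region, so one may assume `b ≤ a`.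

For fixed `b` the mutual information is nondecreasing in `a` on `[b, 1]`: with `q = p0 a + p1 b`,
its derivative is `p0 (log ((1 - q) / q) - log ((1 - a) / a))`, and `q ≤ a` there. So it suffices to
enlarge `a` while keeping `b`. Among the regions with given `b`, Neyman–Pearson says that `a` is
largest for a superlevel set of the likelihood ratio. The ratio being monotone, half-lines are such
sets, and the intermediate value theorem provides one with the prescribed `b` when `0 < b < 1`. If
`b = 0` or `b = 1`, then `a = b` and the information vanishes.
-/

open MeasureTheory Real Set Filter

/-- Binary entropy function. -/
noncomputable def Hb (w : ℝ) : ℝ := -(w * Real.log w) - (1 - w) * Real.log (1 - w)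

/-- The union of the odd-indexed pieces of the partition of ℝ induced by the
thresholds `h 0 < h 1 < ⋯ < h (n-1)`, i.e. `(-∞, h 0) ∪ [h 1, h 2) ∪ ⋯`:
a point `y` belongs to it iff the number of thresholds `≤ y` is even. -/
def oddUnion {n : ℕ} (h : Fin n → ℝ) : Set ℝ :=
  {y | Even (Finset.univ.filter (fun i => h i ≤ y)).card}

noncomputable def A11 (φ0 : ℝ → ℝ) {n : ℕ} (h : Fin n → ℝ) : ℝ := ∫ y in oddUnion h, φ0 y

noncomputable def A22 (φ1 : ℝ → ℝ) {n : ℕ} (h : Fin n → ℝ) : ℝ := ∫ y in (oddUnion h)ᶜ, φ1 y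

noncomputable def q0 (p0 p1 : ℝ) (φ0 φ1 : ℝ → ℝ) {n : ℕ} (h : Fin n → ℝ) : ℝ :=
  p0 * A11 φ0 h + p1 * (1 - A22 φ1 h)

/-- Mutual information of the quantizer with thresholding vector `h`. -/
noncomputable def MI (p0 p1 : ℝ) (φ0 φ1 : ℝ → ℝ) {n : ℕ} (h : Fin n → ℝ) : ℝ :=
  Hb (q0 p0 p1 φ0 φ1 h) - p0 * Hb (A11 φ0 h) - p1 * Hb (A22 φ1 h)

lemma Hb_eq_binEntropy : Hb = binEntropy := by
  ext w
  rw [Hb, binEntropy_eq_negMulLog_add_negMulLog_one_sub, negMulLog, negMulLog]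
  ring

/-- Mutual information between the input and the output of a binary channel whose output is `0` with
probability `a` on input `0` and with probability `b` on input `1`, the inputs having probabilities
`p0` and `p1`. It is the entropy of the output minus its conditional entropy given the input. -/
noncomputable def binaryMutualInfo (p0 p1 a b : ℝ) : ℝ :=
  binEntropy (p0 * a + p1 * b) - p0 * binEntropy a - p1 * binEntropy b

section binaryMutualInfo

variable {p0 p1 a b : ℝ}

lemma binaryMutualInfo_one_sub (hp : p0 + p1 = 1) (a b : ℝ) :
    binaryMutualInfo p0 p1 (1 - a) (1 - b) = binaryMutualInfo p0 p1 a b := by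
  have hq : p0 * (1 - a) + p1 * (1 - b) = 1 - (p0 * a + p1 * b) := by linear_combination hp
  simp only [binaryMutualInfo, hq, binEntropy_one_sub]

lemma binaryMutualInfo_self (hp : p0 + p1 = 1) (b : ℝ) : binaryMutualInfo p0 p1 b b = 0 := by
  rw [binaryMutualInfo, ← add_mul, hp, one_mul]
  linear_combination -binEntropy b * hp

lemma binaryMutualInfo_nonneg (h0 : 0 ≤ p0) (h1 : 0 ≤ p1) (hp : p0 + p1 = 1)
    (ha : a ∈ Icc 0 1) (hb : b ∈ Icc 0 1) : 0 ≤ binaryMutualInfo p0 p1 a b := by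
  have hconcave := strictConcave_binEntropy.concaveOn.2 ha hb h0 h1 hp
  simp only [smul_eq_mul] at hconcave
  rw [binaryMutualInfo]
  linarith

lemma binaryMutualInfo_le_log_two (h0 : 0 ≤ p0) (h1 : 0 ≤ p1)
    (ha : a ∈ Icc 0 1) (hb : b ∈ Icc 0 1) : binaryMutualInfo p0 p1 a b ≤ log 2 := by
  have hq : binEntropy (p0 * a + p1 * b) ≤ log 2 := binEntropy_le_log_two
  have ha' := mul_nonneg h0 (binEntropy_nonneg ha.1 ha.2)
  have hb' := mul_nonneg h1 (binEntropy_nonneg hb.1 hb.2)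
  rw [binaryMutualInfo]
  linarith

lemma hasDerivAt_binaryMutualInfo (ha0 : a ≠ 0) (ha1 : a ≠ 1)
    (hq0 : p0 * a + p1 * b ≠ 0) (hq1 : p0 * a + p1 * b ≠ 1) :
    HasDerivAt (fun a ↦ binaryMutualInfo p0 p1 a b)
      (p0 * ((log (1 - (p0 * a + p1 * b)) - log (p0 * a + p1 * b)) - (log (1 - a) - log a))) a := by
  have hlin : HasDerivAt (fun a ↦ p0 * a + p1 * b) p0 a := by
    simpa only [mul_one] using ((hasDerivAt_id' a).const_mul p0).add_const (p1 * b)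
  have houtput := (hasDerivAt_binEntropy hq0 hq1).comp a hlin
  have hcond := (hasDerivAt_binEntropy ha0 ha1).const_mul p0
  exact ((houtput.sub hcond).sub_const (p1 * binEntropy b)).congr_deriv (by ring)

lemma monotoneOn_binaryMutualInfo (h0 : 0 < p0) (h1 : 0 ≤ p1) (hp : p0 + p1 = 1) (hb : 0 ≤ b) :
    MonotoneOn (fun a ↦ binaryMutualInfo p0 p1 a b) (Icc b 1) := by
  have hq : ∀ a ∈ Ioo b 1, p0 * a + p1 * b ∈ Ioc 0 a := by
    rintro a ⟨hba, -⟩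
    have ha : 0 < a := hb.trans_lt hba
    refine ⟨by positivity, ?_⟩
    calc p0 * a + p1 * b ≤ p0 * a + p1 * a := by gcongr
      _ = a := by rw [← add_mul, hp, one_mul]
  have hderiv : ∀ a ∈ Ioo b 1, HasDerivAt (fun a ↦ binaryMutualInfo p0 p1 a b) _ a :=
    fun a ha ↦ hasDerivAt_binaryMutualInfo (hb.trans_lt ha.1).ne' ha.2.ne (hq a ha).1.ne'
      ((hq a ha).2.trans_lt ha.2).ne
  have hcont : Continuous fun a ↦ binaryMutualInfo p0 p1 a b := by
    unfold binaryMutualInfo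
    fun_prop
  rw [← interior_Icc] at hq hderiv
  refine monotoneOn_of_hasDerivWithinAt_nonneg (convex_Icc b 1) hcont.continuousOn
    (fun a ha ↦ (hderiv a ha).hasDerivWithinAt) fun a ha ↦ ?_
  obtain ⟨hq0, hqa⟩ := hq a ha
  have ha1 : a < 1 := (interior_Icc.subset ha).2
  have hlog : log (p0 * a + p1 * b) ≤ log a := log_le_log hq0 hqa
  have hlog_one_sub : log (1 - a) ≤ log (1 - (p0 * a + p1 * b)) :=
    log_le_log (sub_pos.2 ha1) (sub_le_sub_left hqa 1)
  exact mul_nonneg h0.le (by linarith)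

end binaryMutualInfo

lemma continuous_cdf (μ : Measure ℝ) [IsProbabilityMeasure μ] [NullSingletonClass μ] :
    Continuous (ProbabilityTheory.cdf μ) := by
  set F := ProbabilityTheory.cdf μ
  refine continuous_iff_continuousAt.2 fun x ↦ F.mono.continuousAt_iff_leftLim_eq_rightLim.2 ?_
  have hjump : ENNReal.ofReal (F x - Function.leftLim F x) = 0 := by
    rw [← F.measure_singleton, ProbabilityTheory.measure_cdf, measure_singleton]
  rw [F.rightLim_eq]
  exact (F.mono.leftLim_le le_rfl).antisymm (sub_nonpos.1 (ENNReal.ofReal_eq_zero.1 hjump))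

lemma exists_measureReal_Iio_eq (μ : Measure ℝ) [IsProbabilityMeasure μ] [NullSingletonClass μ]
    {b : ℝ} (hb : b ∈ Ioo 0 1) : ∃ t, μ.real (Iio t) = b := by
  obtain ⟨t, -, ht⟩ := isPreconnected_univ.intermediate_value_Ioo (l₁ := atBot) (l₂ := atTop)
    (by simp) (by simp) (continuous_cdf μ).continuousOn
    (ProbabilityTheory.tendsto_cdf_atBot μ) (ProbabilityTheory.tendsto_cdf_atTop μ) hb
  exact ⟨t, by rw [measureReal_congr Iio_ae_eq_Iic, ← ProbabilityTheory.cdf_eq_real, ht]⟩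

lemma neyman_pearson {α : Type*} [MeasurableSpace α] {μ : Measure α} [IsFiniteMeasure μ]
    {f : α → ENNReal} {c : ENNReal} {S T : Set α} (hS : MeasurableSet S) (hT : MeasurableSet T)
    (hin : ∀ y ∈ T, c ≤ f y) (hout : ∀ y ∉ T, f y ≤ c) (hST : μ S ≤ μ T) :
    μ.withDensity f S ≤ μ.withDensity f T := by
  have hdiff : μ (S \ T) ≤ μ (T \ S) := by
    rw [← measure_inter_add_sdiff S hT, ← measure_inter_add_sdiff T hS, inter_comm T S] at hST
    exact (ENNReal.add_le_add_iff_left (measure_ne_top μ _)).1 hST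
  have hexchange : μ.withDensity f (S \ T) ≤ μ.withDensity f (T \ S) := by
    rw [withDensity_apply _ (hS.diff hT), withDensity_apply _ (hT.diff hS)]
    calc ∫⁻ y in S \ T, f y ∂μ
        ≤ ∫⁻ _ in S \ T, c ∂μ := setLIntegral_mono' (hS.diff hT) fun y hy ↦ hout y hy.2
      _ = c * μ (S \ T) := setLIntegral_const _ _
      _ ≤ c * μ (T \ S) := by gcongr
      _ = ∫⁻ _ in T \ S, c ∂μ := (setLIntegral_const _ _).symm
      _ ≤ ∫⁻ y in T \ S, f y ∂μ := setLIntegral_mono' (hT.diff hS) fun y hy ↦ hin y hy.1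
  rw [← measure_inter_add_sdiff S hT, ← measure_inter_add_sdiff T hS, inter_comm T S]
  gcongr

/-- Mutual information between a binary input with probabilities `p0`, `p1` and the decision whether
the channel output lies in `S`, where `P0` and `P1` are the laws of the output given the input. -/
noncomputable def regionMutualInfo {α : Type*} [MeasurableSpace α] (p0 p1 : ℝ) (P0 P1 : Measure α)
    (S : Set α) : ℝ :=
  binaryMutualInfo p0 p1 (P0.real S) (P1.real S)

section regionMutualInfo

variable {α : Type*} [MeasurableSpace α] {p0 p1 : ℝ}

lemma measureReal_mem_Icc (P : Measure α) [IsProbabilityMeasure P] (S : Set α) :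
    P.real S ∈ Icc 0 1 :=
  ⟨measureReal_nonneg, measureReal_le_one⟩

lemma regionMutualInfo_compl (hp : p0 + p1 = 1) (P0 P1 : Measure α) [IsProbabilityMeasure P0]
    [IsProbabilityMeasure P1] {S : Set α} (hS : MeasurableSet S) :
    regionMutualInfo p0 p1 P0 P1 Sᶜ = regionMutualInfo p0 p1 P0 P1 S := by
  simp only [regionMutualInfo, probReal_compl_eq_one_sub hS, binaryMutualInfo_one_sub hp]

lemma regionMutualInfo_le_log_two (h0 : 0 ≤ p0) (h1 : 0 ≤ p1) (P0 P1 : Measure α)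
    [IsProbabilityMeasure P0] [IsProbabilityMeasure P1] (S : Set α) :
    regionMutualInfo p0 p1 P0 P1 S ≤ log 2 :=
  binaryMutualInfo_le_log_two h0 h1 (measureReal_mem_Icc P0 S) (measureReal_mem_Icc P1 S)

lemma regionMutualInfo_le_of_superlevel (h0 : 0 < p0) (h1 : 0 ≤ p1) (hp : p0 + p1 = 1)
    {P0 P1 : Measure α} [IsProbabilityMeasure P0] [IsFiniteMeasure P1] {f : α → ENNReal}
    (hP : P0 = P1.withDensity f) {c : ENNReal} {S T : Set α}
    (hS : MeasurableSet S) (hT : MeasurableSet T) (hin : ∀ y ∈ T, c ≤ f y) (hout : ∀ y ∉ T, f y ≤ c)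
    (hST : P1.real S = P1.real T) (hle : P1.real S ≤ P0.real S) :
    regionMutualInfo p0 p1 P0 P1 S ≤ regionMutualInfo p0 p1 P0 P1 T := by
  have hmass : P0.real S ≤ P0.real T := by
    refine ENNReal.toReal_mono (measure_ne_top _ _) ?_
    rw [hP]
    exact neyman_pearson hS hT hin hout ((measureReal_eq_measureReal_iff).1 hST).le
  rw [regionMutualInfo, regionMutualInfo, ← hST]
  exact monotoneOn_binaryMutualInfo h0 h1 hp measureReal_nonneg ⟨hle, measureReal_le_one⟩
    ⟨hle.trans hmass, measureReal_le_one⟩ hmass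

end regionMutualInfo

section threshold

variable {p0 p1 : ℝ} {P0 P1 : Measure ℝ} [IsProbabilityMeasure P0] [IsProbabilityMeasure P1]
  [NullSingletonClass P1] {f : ℝ → ENNReal} {S : Set ℝ}

lemma exists_regionMutualInfo_le_Iio_of_le (h0 : 0 < p0) (h1 : 0 ≤ p1) (hp : p0 + p1 = 1)
    (hP : P0 = P1.withDensity f) (hf : Monotone f ∨ Antitone f) (hS : MeasurableSet S)
    (hle : P1.real S ≤ P0.real S) :
    ∃ t, regionMutualInfo p0 p1 P0 P1 S ≤ regionMutualInfo p0 p1 P0 P1 (Iio t) := by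
  rcases hle.eq_or_lt with heq | hlt
  · refine ⟨0, ?_⟩
    rw [regionMutualInfo, heq, binaryMutualInfo_self hp]
    exact binaryMutualInfo_nonneg h0.le h1 hp (measureReal_mem_Icc _ _) (measureReal_mem_Icc _ _)
  have hac : P0 ≪ P1 := hP ▸ withDensity_absolutelyContinuous P1 f
  have hpos : 0 < P1.real S := by
    refine measureReal_nonneg.lt_of_ne' fun hnull ↦ hlt.ne ?_
    rw [hnull, measureReal_def, hac ((measureReal_eq_zero_iff).1 hnull), ENNReal.toReal_zero]
  have hlt_one : P1.real S < 1 := hlt.trans_le measureReal_le_one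
  rcases hf with hmono | hanti
  · obtain ⟨t, ht⟩ := exists_measureReal_Iio_eq P1 (b := 1 - P1.real S)
      ⟨sub_pos.2 hlt_one, sub_lt_self 1 hpos⟩
    have hmass : P1.real S = P1.real (Iio t)ᶜ := by
      rw [probReal_compl_eq_one_sub measurableSet_Iio, ht, sub_sub_cancel]
    refine ⟨t, ?_⟩
    rw [← regionMutualInfo_compl hp P0 P1 measurableSet_Iio]
    exact regionMutualInfo_le_of_superlevel (c := f t) h0 h1 hp hP hS measurableSet_Iio.compl
      (fun y hy ↦ hmono (not_lt.1 hy)) (fun y hy ↦ hmono (not_not.1 hy).le) hmass hle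
  · obtain ⟨t, ht⟩ := exists_measureReal_Iio_eq P1 ⟨hpos, hlt_one⟩
    exact ⟨t, regionMutualInfo_le_of_superlevel (c := f t) h0 h1 hp hP hS measurableSet_Iio
      (fun y hy ↦ hanti (le_of_lt hy)) (fun y hy ↦ hanti (not_lt.1 hy)) ht.symm hle⟩

lemma exists_regionMutualInfo_le_Iio (h0 : 0 < p0) (h1 : 0 ≤ p1) (hp : p0 + p1 = 1)
    (hP : P0 = P1.withDensity f) (hf : Monotone f ∨ Antitone f) (hS : MeasurableSet S) :
    ∃ t, regionMutualInfo p0 p1 P0 P1 S ≤ regionMutualInfo p0 p1 P0 P1 (Iio t) := by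
  rcases le_total (P1.real S) (P0.real S) with hle | hle
  · exact exists_regionMutualInfo_le_Iio_of_le h0 h1 hp hP hf hS hle
  · rw [← regionMutualInfo_compl hp P0 P1 hS]
    refine exists_regionMutualInfo_le_Iio_of_le h0 h1 hp hP hf hS.compl ?_
    rw [probReal_compl_eq_one_sub hS, probReal_compl_eq_one_sub hS]
    exact sub_le_sub_left hle 1

lemma regionMutualInfo_le_iSup_Iio (h0 : 0 < p0) (h1 : 0 ≤ p1) (hp : p0 + p1 = 1)
    (hP : P0 = P1.withDensity f) (hf : Monotone f ∨ Antitone f) (hS : MeasurableSet S) :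
    regionMutualInfo p0 p1 P0 P1 S ≤ ⨆ t : ℝ, regionMutualInfo p0 p1 P0 P1 (Iio t) := by
  obtain ⟨t, ht⟩ := exists_regionMutualInfo_le_Iio h0 h1 hp hP hf hS
  have hbdd : BddAbove (range fun t : ℝ ↦ regionMutualInfo p0 p1 P0 P1 (Iio t)) :=
    ⟨log 2, forall_mem_range.2 fun t ↦ regionMutualInfo_le_log_two h0.le h1 P0 P1 (Iio t)⟩
  exact le_ciSup_of_le hbdd t ht

end threshold

section density

variable {α : Type*} [MeasurableSpace α] {μ : Measure α} {φ φ0 φ1 : α → ℝ}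

lemma measureReal_withDensity_ofReal (hφ : 0 ≤ φ) (hi : Integrable φ μ) {S : Set α}
    (hS : MeasurableSet S) :
    (μ.withDensity fun y ↦ ENNReal.ofReal (φ y)).real S = ∫ y in S, φ y ∂μ := by
  rw [measureReal_def, withDensity_apply _ hS,
    ← ofReal_integral_eq_lintegral_ofReal hi.integrableOn (ae_of_all _ hφ),
    ENNReal.toReal_ofReal (integral_nonneg hφ)]

lemma isProbabilityMeasure_withDensity_ofReal (hφ : 0 ≤ φ) (hi : Integrable φ μ)
    (hI : ∫ y, φ y ∂μ = 1) :
    IsProbabilityMeasure (μ.withDensity fun y ↦ ENNReal.ofReal (φ y)) := by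
  constructor
  rw [withDensity_apply _ MeasurableSet.univ, setLIntegral_univ,
    ← ofReal_integral_eq_lintegral_ofReal hi (ae_of_all _ hφ), hI, ENNReal.ofReal_one]

lemma withDensity_ofReal_eq_withDensity_div (hφ1 : ∀ y, 0 < φ1 y) (hm0 : AEMeasurable φ0 μ)
    (hm1 : AEMeasurable φ1 μ) :
    μ.withDensity (fun y ↦ ENNReal.ofReal (φ0 y)) =
      (μ.withDensity fun y ↦ ENNReal.ofReal (φ1 y)).withDensity
        fun y ↦ ENNReal.ofReal (φ0 y / φ1 y) := by
  refine Eq.trans ?_ (withDensity_mul₀ hm1.ennreal_ofReal (hm0.div hm1).ennreal_ofReal)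
  congr with y
  rw [Pi.mul_apply, ← ENNReal.ofReal_mul (hφ1 y).le, mul_div_cancel₀ _ (hφ1 y).ne']

end density

lemma measurableSet_oddUnion {n : ℕ} (h : Fin n → ℝ) : MeasurableSet (oddUnion h) := by
  have hcount : Measurable fun y : ℝ ↦ (Finset.univ.filter fun i ↦ h i ≤ y).card := by
    simp only [Finset.card_filter]
    exact Finset.measurable_sum _ fun i _ ↦
      Measurable.ite measurableSet_Ici measurable_const measurable_const
  exact hcount (MeasurableSet.of_discrete (s := {k : ℕ | Even k}))

lemma oddUnion_const_fin_one (t : ℝ) : oddUnion (fun _ : Fin 1 ↦ t) = Iio t := by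
  ext y
  by_cases hty : t ≤ y <;> simp [oddUnion, hty, lt_of_not_ge]

lemma MI_eq_binaryMutualInfo {p0 p1 : ℝ} {φ0 φ1 : ℝ → ℝ} (hi1 : Integrable φ1)
    (hI1 : ∫ y, φ1 y = 1) {n : ℕ} (h : Fin n → ℝ) :
    MI p0 p1 φ0 φ1 h =
      binaryMutualInfo p0 p1 (∫ y in oddUnion h, φ0 y) (∫ y in oddUnion h, φ1 y) := by
  simp only [MI, q0, A11, A22, binaryMutualInfo, Hb_eq_binEntropy,
    setIntegral_compl (measurableSet_oddUnion h) hi1, hI1, binEntropy_one_sub, sub_sub_cancel]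

theorem stmt_4_general {p0 p1 : ℝ} (h0 : 0 < p0) (h1 : 0 ≤ p1) (hp : p0 + p1 = 1)
    {μ : Measure ℝ} [NullSingletonClass μ] {φ0 φ1 : ℝ → ℝ}
    (hφ0 : ∀ y, 0 ≤ φ0 y) (hφ1 : ∀ y, 0 < φ1 y)
    (hi0 : Integrable φ0 μ) (hi1 : Integrable φ1 μ)
    (hI0 : ∫ y, φ0 y ∂μ = 1) (hI1 : ∫ y, φ1 y ∂μ = 1)
    (hr : Monotone (fun y ↦ φ0 y / φ1 y) ∨ Antitone (fun y ↦ φ0 y / φ1 y))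
    {S : Set ℝ} (hS : MeasurableSet S) :
    binaryMutualInfo p0 p1 (∫ y in S, φ0 y ∂μ) (∫ y in S, φ1 y ∂μ) ≤
      ⨆ t : ℝ, binaryMutualInfo p0 p1 (∫ y in Iio t, φ0 y ∂μ) (∫ y in Iio t, φ1 y ∂μ) := by
  have hφ1' : 0 ≤ φ1 := fun y ↦ (hφ1 y).le
  have := isProbabilityMeasure_withDensity_ofReal hφ0 hi0 hI0
  have := isProbabilityMeasure_withDensity_ofReal hφ1' hi1 hI1
  have hP := withDensity_ofReal_eq_withDensity_div hφ1 hi0.aemeasurable hi1.aemeasurable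
  have hf : Monotone (fun y ↦ ENNReal.ofReal (φ0 y / φ1 y)) ∨
      Antitone (fun y ↦ ENNReal.ofReal (φ0 y / φ1 y)) :=
    hr.imp ENNReal.ofReal_mono.comp ENNReal.ofReal_mono.comp_antitone
  simpa only [regionMutualInfo, hS, measurableSet_Iio, measureReal_withDensity_ofReal hφ0 hi0,
    measureReal_withDensity_ofReal hφ1' hi1] using regionMutualInfo_le_iSup_Iio h0 h1 hp hP hf hS

/-- if the likelihood ratio `r = φ0/φ1` is strictly monotone, then a
single-threshold quantizer is optimal among all finite-threshold quantizers. -/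
theorem stmt_4
    (p0 p1 : ℝ) (hp0 : p0 ∈ Set.Ioo (0:ℝ) 1) (hp1 : p1 ∈ Set.Ioo (0:ℝ) 1)
    (hp : p0 + p1 = 1)
    (φ0 φ1 : ℝ → ℝ) (hφ0 : ∀ y, 0 ≤ φ0 y) (hφ1 : ∀ y, 0 < φ1 y)
    (hi0 : Integrable φ0) (hi1 : Integrable φ1)
    (hI0 : ∫ y, φ0 y = 1) (hI1 : ∫ y, φ1 y = 1)
    (hc0 : Continuous φ0) (hc1 : Continuous φ1)
    (hr : StrictMono (fun y => φ0 y / φ1 y) ∨ StrictAnti (fun y => φ0 y / φ1 y)) :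
    ∀ (n : ℕ), 1 ≤ n → ∀ h : Fin n → ℝ, StrictMono h →
      MI p0 p1 φ0 φ1 h ≤
        sSup (Set.range (fun t : ℝ => MI p0 p1 φ0 φ1 (fun _ : Fin 1 => t))) := by
  intro n _ h _
  simpa only [MI_eq_binaryMutualInfo hi1 hI1, oddUnion_const_fin_one, sSup_range] using
    stmt_4_general hp0.1 hp1.1.le hp hφ0 hφ1 hi0 hi1 hI0 hI1
      (hr.imp StrictMono.monotone StrictAnti.antitone) (measurableSet_oddUnion h)
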